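/- Let k ≥ 3 be an integer. If A = (α_{ij}) ∈ Λ_{k+2}^k is a canonical matrix, then α_{1,1} = α_{1,2} = α_{2,1} = 0, and α_{1,j} = 1 for all 3 ≤ j ≤ k+2 and α_{i,1} = 1 for all 3 ≤ i ≤ k+2. -/

import Mathlib

/-- `Lambda n k` : the set of `n×n` binary matrices with exactly `k` ones
in each row and each column. -/
def Lambda (n k : ℕ) : Set (Matrix (Fin n) (Fin n) Bool) :=
  {A | (∀ i, (Finset.univ.filter fun j => A i j = true).card = k) ∧
       (∀ j, (Finset.univ.filter fun i => A i j = true).card = k)}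

/-- `A ∼ B` iff `A` is obtained from `B` by permuting rows and/or columns. -/
def rcEquiv {n : ℕ} (A B : Matrix (Fin n) (Fin n) Bool) : Prop :=
  ∃ σ τ : Equiv.Perm (Fin n), ∀ i j, A i j = B (σ i) (τ j)

/-- `mu n k` : the number of equivalence classes of `Λ_n^k` under `∼`. -/
noncomputable def mu (n k : ℕ) : ℕ :=
  Nat.card (Quot fun A B : {M : Matrix (Fin n) (Fin n) Bool // M ∈ Lambda n k} =>
    rcEquiv A.1 B.1)

/-- The natural number whose `n`-digit binary representation is row `i` of `A`. -/
def rowVal {n : ℕ} (A : Matrix (Fin n) (Fin n) Bool) (i : Fin n) : ℕ :=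
  ∑ j : Fin n, if A i j = true then 2 ^ (n - 1 - (j : ℕ)) else 0

/-- A matrix is canonical when the row values of `A` and of `Aᵀ` are both
nondecreasing. -/
def IsCanonical {n : ℕ} (A : Matrix (Fin n) (Fin n) Bool) : Prop :=
  Monotone (rowVal A) ∧ Monotone (rowVal A.transpose)

/-!
An `n`-digit binary numeral has leading digit `1` exactly when its value is at least `2 ^ (n - 1)`.
Hence nondecreasing row values force the leading digits, which form the first column, to be
nondecreasing as well: the ones of that column all lie at its end, so their number determines it.
The first row is the first column of the transpose.
-/

theorem mem_iff_card_Ici_le_card {α : Type*} [LinearOrder α] [LocallyFiniteOrderTop α]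
    {s : Finset α} (hs : IsUpperSet (s : Set α)) (a : α) :
    a ∈ s ↔ (Finset.Ici a).card ≤ s.card := by
  have subset_of_mem (ha : a ∈ s) : Finset.Ici a ⊆ s := fun b hb =>
    hs (Finset.mem_Ici.mp hb) ha
  refine ⟨fun ha => Finset.card_le_card (subset_of_mem ha), fun hcard => ?_⟩
  by_contra ha
  have hsub : s ⊂ Finset.Ici a := by
    refine (Finset.ssubset_iff_of_subset fun b hb => ?_).mpr ⟨a, by simp, ha⟩
    exact Finset.mem_Ici.mpr (le_of_not_ge fun hba => ha (hs hba hb))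
  exact (Finset.card_lt_card hsub).not_ge hcard

theorem eq_true_iff_le_add_card_of_monotone {n : ℕ} {f : Fin n → Bool} (hf : Monotone f)
    (i : Fin n) :
    f i = true ↔ n ≤ i + (Finset.univ.filter fun j => f j = true).card := by
  have hupper : IsUpperSet (↑(Finset.univ.filter fun j => f j = true) : Set (Fin n)) := by
    intro a b hab ha
    simpa using Bool.le_iff_imp.mp (hf hab) (by simpa using ha)
  calc f i = true ↔ i ∈ Finset.univ.filter fun j => f j = true := by simp
    _ ↔ n - i ≤ (Finset.univ.filter fun j => f j = true).card := by
      rw [mem_iff_card_Ici_le_card hupper, Fin.card_Ici]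
    _ ↔ n ≤ i + (Finset.univ.filter fun j => f j = true).card := Nat.sub_le_iff_le_add'

theorem rowVal_lt_two_pow_iff {n d : ℕ} {A : Matrix (Fin n) (Fin n) Bool} {i : Fin n} :
    rowVal A i < 2 ^ d ↔ ∀ j : Fin n, A i j = true → n - 1 - (j : ℕ) < d := by
  have rowVal_eq : rowVal A i =
      ∑ j ∈ Finset.univ.filter fun j => A i j = true, 2 ^ (n - 1 - (j : ℕ)) :=
    (Finset.sum_filter ..).symm
  have exponent_injective : Function.Injective fun j : Fin n => n - 1 - (j : ℕ) :=
    fun j l hjl => by grind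
  constructor
  · intro hlt j hj
    refine (Nat.pow_lt_pow_iff_right one_lt_two).mp (lt_of_le_of_lt ?_ hlt)
    rw [rowVal_eq]
    exact Finset.single_le_sum (f := fun j : Fin n => 2 ^ (n - 1 - (j : ℕ)))
      (fun _ _ => Nat.zero_le _) (by simpa using hj)
  · intro hlt
    rw [rowVal_eq, ← Finset.sum_image (f := fun e => 2 ^ e) exponent_injective.injOn]
    exact Nat.geomSum_lt le_rfl (by simpa using hlt)

theorem two_pow_le_rowVal_iff {n : ℕ} [NeZero n] {A : Matrix (Fin n) (Fin n) Bool} {i : Fin n} :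
    2 ^ (n - 1) ≤ rowVal A i ↔ A i 0 = true := by
  rw [← not_lt, rowVal_lt_two_pow_iff]
  constructor
  · intro h
    push Not at h
    obtain ⟨j, hj, hle⟩ := h
    have hj0 : j = 0 := Fin.ext (by rw [Fin.val_zero]; lia)
    rwa [← hj0]
  · intro h0 hlt
    simpa using hlt 0 h0

theorem monotone_first_column_of_monotone_rowVal {n : ℕ} [NeZero n]
    {A : Matrix (Fin n) (Fin n) Bool} (hA : Monotone (rowVal A)) :
    Monotone fun i => A i 0 := by
  intro i j hij
  rw [Bool.le_iff_imp, ← two_pow_le_rowVal_iff, ← two_pow_le_rowVal_iff]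
  exact fun hi => hi.trans (hA hij)

theorem canonical_corner_entries_general {n : ℕ} [NeZero n] {A : Matrix (Fin n) (Fin n) Bool}
    (hcan : IsCanonical A) :
    (∀ j : Fin n, A 0 j = true ↔ n ≤ j + (Finset.univ.filter fun l => A 0 l = true).card) ∧
    (∀ i : Fin n, A i 0 = true ↔ n ≤ i + (Finset.univ.filter fun l => A l 0 = true).card) :=
  ⟨eq_true_iff_le_add_card_of_monotone (monotone_first_column_of_monotone_rowVal hcan.2),
    eq_true_iff_le_add_card_of_monotone (monotone_first_column_of_monotone_rowVal hcan.1)⟩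

theorem canonical_corner_entries (k : ℕ) (hk : 3 ≤ k)
    (A : Matrix (Fin (k + 2)) (Fin (k + 2)) Bool)
    (hA : A ∈ Lambda (k + 2) k) (hcan : IsCanonical A) :
    A 0 0 = false ∧ A 0 1 = false ∧ A 1 0 = false ∧
    (∀ j : Fin (k + 2), 2 ≤ (j : ℕ) → A 0 j = true) ∧
    (∀ i : Fin (k + 2), 2 ≤ (i : ℕ) → A i 0 = true) := by
  obtain ⟨hrow, hcol⟩ := canonical_corner_entries_general hcan
  simp only [hA.1 0, hA.2 0, add_comm _ k, Nat.add_le_add_iff_left] at hrow hcol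
  simp [← Bool.not_eq_true, hrow, hcol]
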